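/- arXiv:1601.03174 — 3 statements merged into one kernel-verified Lean document; each statement's English description precedes it below -/
import Mathlib

section
/- Let k ≥ 2 and let G be a d-regular graph with n vertices and m edges, where d − (k−1) ≥ 3. Let G' be the subdivision of G. Then G contains a clique on k vertices if and only if there exists a vertex set U ⊆ V(G') with |U| ≤ k(k−1)/2 such that the degree multiset of G'−U consists of n−k copies of d, k copies of d−(k−1), and m − k(k−1)/2 copies of 2. -/
/-- The degree of a vertex, as the `ncard` of its neighbor set. -/
noncomputable def ndeg {V : Type*} (H : SimpleGraph V) (v : V) : ℕ :=
  (H.neighborSet v).ncard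

/-- The subdivision of a graph `G`: every edge `uv` is replaced by a new vertex
(the corresponding element of `G.edgeSet`) adjacent exactly to `u` and `v`. -/
def subdiv {V : Type*} (G : SimpleGraph V) : SimpleGraph (V ⊕ G.edgeSet) where
  Adj x y :=
    match x, y with
    | Sum.inl u, Sum.inr e => u ∈ (e : Sym2 V)
    | Sum.inr e, Sum.inl u => u ∈ (e : Sym2 V)
    | _, _ => False
  symm := ⟨by rintro (u | e) (w | f) h <;> exact h⟩
  loopless := ⟨by rintro (u | e) h <;> exact h⟩

theorem subdiv_deg_inl {V : Type*} (G : SimpleGraph V) (U : Finset (V ⊕ G.edgeSet)) (v : V) :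
    ((subdiv G).neighborSet (Sum.inl v) \ ↑U).ncard =
      {w | ∃ h : G.Adj v w, (Sum.inr ⟨s(v, w), h⟩ : V ⊕ G.edgeSet) ∉ U}.ncard := by
  symm
  refine Set.ncard_congr (fun w hw => Sum.inr ⟨s(v, w), hw.1⟩) ?_ ?_ ?_
  · rintro w ⟨h, hU⟩
    refine ⟨?_, by simpa using hU⟩
    show v ∈ s(v, w)
    simp
  · rintro a b ha hb h
    have h1 : s(v, a) = s(v, b) := congrArg Subtype.val (Sum.inr.inj h)
    exact Sym2.congr_right.mp h1
  · rintro (u | ⟨e, he⟩) ⟨h1, h2⟩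
    · exact h1.elim
    · have h3 : v ∈ e := h1
      obtain ⟨w, rfl⟩ := Sym2.mem_iff_exists.mp h3
      exact ⟨w, ⟨he, by simpa using h2⟩, rfl⟩

theorem subdiv_deg_inr {V : Type*} (G : SimpleGraph V) (e : G.edgeSet) :
    ((subdiv G).neighborSet (Sum.inr e)).ncard = 2 := by
  obtain ⟨e, he⟩ := e
  induction e using Sym2.ind with
  | _ a b =>
    have hab : a ≠ b := G.ne_of_adj he
    have : (subdiv G).neighborSet (Sum.inr ⟨s(a, b), he⟩) = {Sum.inl a, Sum.inl b} := by
      ext (u | f)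
      · show u ∈ s(a, b) ↔ _
        simp
      · show False ↔ _
        simp
    rw [this, Set.ncard_pair (by simpa using hab)]

theorem subdiv_forward
    {V : Type*} [Fintype V] [DecidableEq V] (G : SimpleGraph V) [DecidableRel G.Adj]
    (n m k d : ℕ) 
    (hn : Fintype.card V = n) (hm : G.edgeSet.ncard = m)
    (hreg : ∀ v : V, ndeg G v = d) (K : Finset V) (hK : G.IsNClique k K) :
      ∃ U : Finset (V ⊕ G.edgeSet),
        U.card ≤ k * (k - 1) / 2 ∧
        ((Finset.univ \ U).val.map
            fun x => (((subdiv G).neighborSet x) \ ↑U).ncard) =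
          Multiset.replicate (n - k) d + Multiset.replicate k (d - (k - 1)) +
            Multiset.replicate (m - k * (k - 1) / 2) 2 := by
  classical
  obtain ⟨hcl, hKc⟩ := hK
  set P : Finset (Sym2 V) := K.offDiag.image Sym2.mk.uncurry with hP
  have hmemP : ∀ a b, s(a, b) ∈ P ↔ a ∈ K ∧ b ∈ K ∧ a ≠ b := by
    intro a b
    simp only [hP, Finset.mem_image, Finset.mem_offDiag, Prod.exists, Function.uncurry]
    constructor
    · rintro ⟨x, y, ⟨hx, hy, hxy⟩, h⟩
      rcases Sym2.eq_iff.mp h with ⟨rfl, rfl⟩ | ⟨rfl, rfl⟩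
      · exact ⟨hx, hy, hxy⟩
      · exact ⟨hy, hx, hxy.symm⟩
    · exact fun h => ⟨a, b, h, rfl⟩
  have hPc : P.card = k * (k - 1) / 2 := by
    rw [← Nat.choose_two_right, ← hKc, ← Sym2.card_image_offDiag]
  set F : Finset G.edgeSet := Finset.univ.filter (fun e => e.1 ∈ P) with hF
  have hFP : F.map (Function.Embedding.subtype _) = P := by
    ext e
    induction e using Sym2.ind with
    | _ a b =>
      simp only [hF, Finset.mem_map, Finset.mem_filter, Finset.mem_univ, true_and,
        Function.Embedding.subtype_apply]
      constructor
      · rintro ⟨x, hx, h⟩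
        rwa [← h]
      · intro h
        have h' := (hmemP a b).1 h
        exact ⟨⟨s(a, b), hcl h'.1 h'.2.1 h'.2.2⟩, h, rfl⟩
  have hFc : F.card = k * (k - 1) / 2 := by
    rw [← hPc, ← hFP, Finset.card_map]
  have hm' : Fintype.card G.edgeSet = m := by
    rw [← hm, ← Nat.card_coe_set_eq, Nat.card_eq_fintype_card]
  refine ⟨F.map Function.Embedding.inr, by rw [Finset.card_map, hFc], ?_⟩
  have hU : (Finset.univ \ F.map Function.Embedding.inr : Finset (V ⊕ G.edgeSet)) =
      (Finset.univ : Finset V).disjSum Fᶜ := by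
    ext (x | x) <;> simp
  have hdr : ∀ e : G.edgeSet, ((subdiv G).neighborSet (Sum.inr e) \
      ↑(F.map Function.Embedding.inr : Finset (V ⊕ G.edgeSet))).ncard = 2 := by
    intro e
    rw [← subdiv_deg_inr G e]
    congr 1
    ext (x | x)
    · simp
    · simp only [Set.mem_sdiff]
      constructor
      · exact fun h => h.1
      · exact fun h => h.elim
  have hdl : ∀ v : V, ((subdiv G).neighborSet (Sum.inl v) \
      ↑(F.map Function.Embedding.inr : Finset (V ⊕ G.edgeSet))).ncard =
        if v ∈ K then d - (k - 1) else d := by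
    intro v
    rw [subdiv_deg_inl]
    have hset : {w | ∃ h : G.Adj v w, (Sum.inr ⟨s(v, w), h⟩ : V ⊕ G.edgeSet) ∉
        F.map Function.Embedding.inr} = {w | G.Adj v w ∧ ¬ (v ∈ K ∧ w ∈ K)} := by
      ext w
      simp only [Set.mem_ofPred_eq]
      constructor
      · rintro ⟨h, h2⟩
        refine ⟨h, fun h3 => h2 ?_⟩
        simpa [hF] using (hmemP v w).2 ⟨h3.1, h3.2, G.ne_of_adj h⟩
      · rintro ⟨h, h2⟩
        refine ⟨h, fun h3 => h2 ?_⟩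
        have h4 : s(v, w) ∈ P := by simpa [hF] using h3
        have := (hmemP v w).1 h4
        exact ⟨this.1, this.2.1⟩
    rw [hset, ← hreg v, ndeg]
    split_ifs with hv
    · have : {w | G.Adj v w ∧ ¬ (v ∈ K ∧ w ∈ K)} = G.neighborSet v \ ↑(K.erase v) := by
        ext w
        simp only [Set.mem_ofPred_eq, Set.mem_sdiff, SimpleGraph.mem_neighborSet,
          Finset.coe_erase, Finset.mem_coe, Set.mem_singleton_iff]
        constructor
        · rintro ⟨h, h2⟩; exact ⟨h, fun h3 => h2 ⟨hv, h3.1⟩⟩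
        · rintro ⟨h, h2⟩; exact ⟨h, fun h3 => h2 ⟨h3.2, (G.ne_of_adj h).symm⟩⟩
      rw [this, Set.ncard_sdiff, Set.ncard_coe_finset, Finset.card_erase_of_mem hv, hKc]
      intro w hw
      have hw' := Finset.mem_erase.1 (Finset.mem_coe.1 hw)
      exact hcl hv hw'.2 hw'.1.symm
    · congr 1
      ext w
      simp [hv]
  rw [hU, Finset.val_disjSum, Multiset.disjSum, Multiset.map_add, Multiset.map_map,
    Multiset.map_map]
  congr 1
  · rw [Multiset.map_congr rfl (g := fun v => if v ∈ K then d - (k - 1) else d)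
        (fun v _ => by exact hdl v),
      ← Multiset.filter_add_not (fun v => v ∈ K) Finset.univ.val, Multiset.map_add, add_comm]
    congr 1
    · rw [Multiset.map_congr rfl (g := fun _ => d), Multiset.map_const',
        ← Finset.filter_val, Finset.card_val, Finset.filter_not, Finset.card_sdiff]
      · simp [hn, hKc]
      · intro x hx
        simp [(Multiset.mem_filter.1 hx).2]
    · rw [Multiset.map_congr rfl (g := fun _ => d - (k - 1)), Multiset.map_const',
        ← Finset.filter_val, Finset.card_val]
      · simp [hKc]
      · intro x hx
        simp [(Multiset.mem_filter.1 hx).2]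
  · rw [Multiset.map_congr rfl (g := fun _ => 2) (fun v _ => by exact hdr v), Multiset.map_const',
      Finset.card_val, Finset.card_compl, hFc, hm']

theorem subdiv_backward
    {V : Type*} [Fintype V] [DecidableEq V] (G : SimpleGraph V) [DecidableRel G.Adj]
    (n m k d : ℕ) (hk : 2 ≤ k) (hd : 3 ≤ d - (k - 1))
    (hn : Fintype.card V = n)
    (hreg : ∀ v : V, ndeg G v = d) (U : Finset (V ⊕ G.edgeSet))
    (hU : ((Finset.univ \ U).val.map
            fun x => (((subdiv G).neighborSet x) \ ↑U).ncard) =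
          Multiset.replicate (n - k) d + Multiset.replicate k (d - (k - 1)) +
            Multiset.replicate (m - k * (k - 1) / 2) 2) :
    ∃ K : Finset V, G.IsNClique k K := by
  classical
  set f : V ⊕ G.edgeSet → ℕ := fun x => (((subdiv G).neighborSet x) \ ↑U).ncard with hf
  have hfr : ∀ e, f (Sum.inr e) ≤ 2 := fun e => by
    rw [← subdiv_deg_inr G e]
    exact Set.ncard_le_ncard Set.sdiff_subset (Set.toFinite _)
  have h1 : n ≤ ((Finset.univ \ U).filter (fun x => 3 ≤ f x)).card := by
    have := congrArg (Multiset.countP (fun x => 3 ≤ x)) hU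
    rw [Multiset.countP_map, ← Finset.filter_val, Finset.card_val] at this
    rw [this, Multiset.countP_add, Multiset.countP_add,
      Multiset.countP_eq_card.2 (?_ : ∀ a ∈ Multiset.replicate (n - k) d, _),
      Multiset.countP_eq_card.2 (?_ : ∀ a ∈ Multiset.replicate k (d - (k - 1)), _)]
    · simp only [Multiset.card_replicate]; omega
    · intro a ha; rw [Multiset.eq_of_mem_replicate ha]; exact hd
    · intro a ha; rw [Multiset.eq_of_mem_replicate ha]; omega
  have h2 : (Finset.univ \ U).filter (fun x => 3 ≤ f x) =
      Finset.univ.map Function.Embedding.inl := by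
    apply Finset.eq_of_subset_of_card_le
    · rintro (x | x) hx
      · simp
      · have := (Finset.mem_filter.1 hx).2
        have := hfr x
        omega
    · rw [Finset.card_map, Finset.card_univ, hn]; exact h1
  have h3 : ∀ v : V, Sum.inl v ∉ U ∧ 3 ≤ f (Sum.inl v) := by
    intro v
    have : (Sum.inl v : V ⊕ G.edgeSet) ∈ (Finset.univ \ U).filter (fun x => 3 ≤ f x) := by
      rw [h2]; simp
    simpa using this
  set K : Finset V := Finset.univ.filter (fun v => f (Sum.inl v) = d - (k - 1)) with hK
  have hKc : K.card = k := by
    have := congrArg (Multiset.count (d - (k - 1))) hU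
    rw [Multiset.count_map, ← Finset.filter_val, Finset.card_val] at this
    rw [Multiset.count_add, Multiset.count_add, Multiset.count_replicate,
      Multiset.count_replicate, Multiset.count_replicate, if_neg (by omega), if_pos rfl,
      if_neg (by omega)] at this
    rw [zero_add, add_zero] at this
    rw [← this, ← Finset.card_map Function.Embedding.inl (s := K)]
    congr 1
    ext (x | x)
    · simp [hK, (h3 x).1, eq_comm]
    · have := hfr x
      simp [hK]
      omega
  have hnK : ∀ v, v ∉ K → f (Sum.inl v) = d := by
    intro v hv
    have hm : f (Sum.inl v) ∈ (Finset.univ \ U).val.map f :=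
      Multiset.mem_map_of_mem f (by rw [Finset.mem_val]; simpa using (h3 v).1)
    rw [hU] at hm
    simp only [Multiset.mem_add] at hm
    rcases hm with (hm | hm) | hm
    · exact Multiset.eq_of_mem_replicate hm
    · exact absurd (by simpa [hK] using Multiset.eq_of_mem_replicate hm) hv
    · have := Multiset.eq_of_mem_replicate hm
      have := (h3 v).2
      omega
  let R : V → Set V := fun v => {w | ∃ h : G.Adj v w, (Sum.inr ⟨s(v, w), h⟩ : V ⊕ G.edgeSet) ∈ U}
  have hR : ∀ v, f (Sum.inl v) + (R v).ncard = d := by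
    intro v
    have hs : R v ⊆ G.neighborSet v := fun w hw => hw.1
    have hdf : {w | ∃ h : G.Adj v w, (Sum.inr ⟨s(v, w), h⟩ : V ⊕ G.edgeSet) ∉ U} =
        G.neighborSet v \ R v := by
      ext w
      constructor
      · rintro ⟨h, h'⟩; exact ⟨h, fun h2 => h' h2.2⟩
      · rintro ⟨h, h'⟩; exact ⟨h, fun h2 => h' ⟨h, h2⟩⟩
    rw [← hreg v, ndeg, ← Set.ncard_sdiff_add_ncard_of_subset hs (Set.toFinite _), hf]
    simp only
    rw [subdiv_deg_inl, hdf]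
  have hsym : ∀ v w, w ∈ R v → v ∈ R w := by
    rintro v w ⟨h, h'⟩
    refine ⟨h.symm, ?_⟩
    have : (⟨s(w, v), h.symm⟩ : G.edgeSet) = ⟨s(v, w), h⟩ := Subtype.ext Sym2.eq_swap
    rw [this]; exact h'
  have hRK : ∀ v w, w ∈ R v → w ∈ K := by
    intro v w h
    by_contra hw
    have h4 := hR w
    rw [hnK w hw] at h4
    have h5 : (R w).ncard = 0 := by omega
    rw [Set.ncard_eq_zero (Set.toFinite _)] at h5
    have := hsym v w h
    rw [h5] at this
    exact this
  refine ⟨K, ?_, hKc⟩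
  intro v hv w hw hvw
  have hv' : v ∈ K := hv
  have hfv : f (Sum.inl v) = d - (k - 1) := by simpa [hK] using hv'
  have heq : R v = ↑(K.erase v) := by
    apply Set.eq_of_subset_of_ncard_le
    · intro x hx
      exact Finset.mem_coe.2 (Finset.mem_erase.2 ⟨(G.ne_of_adj hx.1).symm, hRK v x hx⟩)
    · rw [Set.ncard_coe_finset, Finset.card_erase_of_mem hv', hKc]
      have := hR v
      omega
    · exact Set.toFinite _
  have : w ∈ R v := by
    rw [heq]
    exact Finset.mem_coe.2 (Finset.mem_erase.2 ⟨hvw.symm, hw⟩)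
  exact this.1

theorem clique_iff_vertexDeletion_in_subdivision_to_degree_sequence
    {V : Type*} [Fintype V] [DecidableEq V] (G : SimpleGraph V) [DecidableRel G.Adj]
    (n m k d : ℕ) (hk : 2 ≤ k) (hd : 3 ≤ d - (k - 1))
    (hn : Fintype.card V = n) (hm : G.edgeSet.ncard = m)
    (hreg : ∀ v : V, ndeg G v = d) :
    (∃ K : Finset V, G.IsNClique k K) ↔
      ∃ U : Finset (V ⊕ G.edgeSet),
        U.card ≤ k * (k - 1) / 2 ∧
        ((Finset.univ \ U).val.map
            fun x => (((subdiv G).neighborSet x) \ ↑U).ncard) =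
          Multiset.replicate (n - k) d + Multiset.replicate k (d - (k - 1)) +
            Multiset.replicate (m - k * (k - 1) / 2) 2 := by
  constructor
  · rintro ⟨K, hK⟩
    exact subdiv_forward G n m k d hn hm hreg K hK
  · rintro ⟨U, -, hU⟩
    exact subdiv_backward G n m k d hk hd hn hreg U hU
end

section
/- Let k be a nonnegative integer, let σ be a finite multiset of nonnegative integers with maximum Δ, and let G be a graph with maximum degree at most Δ. For each i ∈ {0, …, Δ} let W_i = {v ∈ V(G) : d_G(v) = i}, δ_i = |W_i|, s_i = min(δ_i, 2k(Δ+1)), let W_i' ⊆ W_i be any subset of size s_i, and let W = W_0' ∪ ⋯ ∪ W_Δ'. Assume that for every i, σ contains at least δ_i − s_i copies of i. Let h = Δ+2 and let G' be the graph obtained from the induced subgraph G[W] by adding h new pairwise adjacent vertices v_1, …, v_h and, for every u ∈ W with r = |N_G(u)∖W| ≥ 1, adding the edges uv_1, …, uv_r. Let σ' be the multiset {d_{G'}(v_1), …, d_{G'}(v_h)} together with the multiset obtained from σ by removing, for each i ∈ {0, …, Δ}, exactly δ_i − s_i copies of i. Then G' has at most 2k(Δ+1)² + Δ + 2 vertices,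 and there exists a set A of unordered pairs of distinct non-adjacent vertices of G with |A| ≤ k and degree multiset of G+A equal to σ if and only if there exists a set A' of unordered pairs of distinct non-adjacent vertices of G' with |A'| ≤ k and degree multiset of G'+A' equal to σ'. -/
/-- The graph obtained from `G[W]` by adding `h` new pairwise adjacent vertices
`v_1, …, v_h` (here indexed by `Fin h`) and joining every `u ∈ W` to
`v_1, …, v_r`, where `r = |N_G(u) ∖ W|`. -/
def kernelGraph {V : Type*} (G : SimpleGraph V) (W : Finset V) (h : ℕ) :
    SimpleGraph (↥W ⊕ Fin h) where
  Adj x y :=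
    match x, y with
    | Sum.inl u, Sum.inl w => G.Adj ↑u ↑w
    | Sum.inl u, Sum.inr j => (j : ℕ) < ((G.neighborSet ↑u) \ ↑W).ncard
    | Sum.inr j, Sum.inl u => (j : ℕ) < ((G.neighborSet ↑u) \ ↑W).ncard
    | Sum.inr i, Sum.inr j => i ≠ j
  symm := by
    constructor
    rintro (u | i) (w | j) hxy
    · exact hxy.symm
    · exact hxy
    · exact hxy
    · exact hxy.symm
  loopless := by
    constructor
    rintro (u | i) hxy
    · exact G.loopless.irrefl _ hxy
    · exact hxy rfl


/-- Number of pairs of `A` containing `v`. -/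
def pcnt {α : Type*} [DecidableEq α] (A : Finset (Sym2 α)) (v : α) : ℕ :=
  (A.filter (fun e => v ∈ e)).card

theorem ndeg_sup {α : Type*} [Finite α] [DecidableEq α] (G : SimpleGraph α)
    (A : Finset (Sym2 α)) (hA : ∀ e ∈ A, ¬ e.IsDiag ∧ e ∉ G.edgeSet) (v : α) :
    ndeg (G ⊔ SimpleGraph.fromEdgeSet ↑A) v = ndeg G v + pcnt A v := by
  unfold ndeg pcnt
  have h1 : (G ⊔ SimpleGraph.fromEdgeSet (A : Set (Sym2 α))).neighborSet v
      = G.neighborSet v ∪ {w | s(v, w) ∈ A} := by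
    ext w
    simp only [SimpleGraph.mem_neighborSet, SimpleGraph.sup_adj, SimpleGraph.fromEdgeSet_adj,
      Set.mem_union, Set.mem_ofPred_eq, Finset.mem_coe]
    constructor
    · rintro (h | h)
      · exact Or.inl h
      · exact Or.inr h.1
    · rintro (h | h)
      · exact Or.inl h
      · exact Or.inr ⟨h, fun e => (hA _ h).1 (by simpa using e)⟩
  rw [h1, Set.ncard_union_eq ?_ (Set.toFinite _) (Set.toFinite _)]
  · congr 1
    rw [← Set.ncard_coe_finset, ← Set.ncard_image_of_injective (f := fun w => s(v, w))]
    · congr 1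
      ext e
      simp only [Set.mem_image, Set.mem_ofPred_eq, Finset.coe_filter]
      constructor
      · rintro ⟨w, hw, rfl⟩
        exact ⟨hw, by simp⟩
      · rintro ⟨he, hv⟩
        obtain ⟨w, rfl⟩ := hv
        exact ⟨w, he, rfl⟩
    · intro a b hab
      exact Sym2.congr_right.1 hab
  · rw [Set.disjoint_left]
    intro w hw hw'
    exact (hA _ hw').2 (by simpa using hw)

theorem pcnt_image {α β : Type*} [DecidableEq α] [DecidableEq β] (f : α → β)
    (hf : Function.Injective f) (C : Finset (Sym2 α)) (u : α) :
    pcnt (C.image (Sym2.map f)) (f u) = pcnt C u := by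
  unfold pcnt
  rw [Finset.filter_image, Finset.card_image_of_injective _ (Sym2.map.injective hf)]
  congr 1
  ext e
  simp only [Finset.mem_filter, Sym2.mem_map]
  constructor
  · rintro ⟨h, a, ha, hau⟩
    exact ⟨h, hf hau ▸ ha⟩
  · rintro ⟨h, ha⟩
    exact ⟨h, u, ha, rfl⟩

theorem pcnt_image_zero {α β : Type*} [DecidableEq α] [DecidableEq β] (f : α → β)
    (C : Finset (Sym2 α)) (v : β) (hv : ∀ u, f u ≠ v) :
    pcnt (C.image (Sym2.map f)) v = 0 := by
  unfold pcnt
  rw [Finset.card_eq_zero, Finset.filter_eq_empty_iff]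
  intro e he hve
  obtain ⟨e, -, rfl⟩ := Finset.mem_image.1 he
  obtain ⟨a, -, ha⟩ := Sym2.mem_map.1 hve
  exact hv a ha

theorem exists_preimage {α β : Type*} [DecidableEq α] [DecidableEq β] (f : α → β)
    (hf : Function.Injective f)
    (A : Finset (Sym2 β)) (hA : ∀ e ∈ A, ∀ v ∈ e, ∃ u, f u = v) :
    ∃ C : Finset (Sym2 α), A = C.image (Sym2.map f) ∧ C.card = A.card := by
  classical
  have h : (A : Set (Sym2 β)) ⊆ Set.range (Sym2.map f) := by
    intro e he
    induction e using Sym2.ind with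
    | _ a b =>
      obtain ⟨x, rfl⟩ := hA _ he a (by simp)
      obtain ⟨y, rfl⟩ := hA _ he b (by simp)
      exact ⟨s(x, y), by simp⟩
  refine ⟨A.preimage (Sym2.map f) (Sym2.map.injective hf).injOn, ?_, ?_⟩
  · rw [Finset.image_preimage, Finset.filter_true_of_mem]
    intro e he
    exact h he
  · rw [← Finset.card_image_of_injective _ (Sym2.map.injective hf), Finset.image_preimage,
      Finset.filter_true_of_mem]
    intro e he
    exact h he

theorem ndeg_kernel_inl {V : Type*} [Fintype V] [DecidableEq V] (G : SimpleGraph V)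
    (W : Finset V) (h : ℕ) (u : ↥W) (hu : ndeg G u ≤ h) :
    ndeg (kernelGraph G W h) (Sum.inl u) = ndeg G u := by
  have hr : ((G.neighborSet ↑u) \ ↑W).ncard ≤ h :=
    (Set.ncard_le_ncard Set.sdiff_subset (Set.toFinite _)).trans hu
  unfold ndeg
  have h1 : (kernelGraph G W h).neighborSet (Sum.inl u)
      = Sum.inl '' {w : ↥W | G.Adj u w} ∪
        Sum.inr '' {j : Fin h | (j : ℕ) < ((G.neighborSet ↑u) \ ↑W).ncard} := by
    ext (w | j) <;> simp [kernelGraph, SimpleGraph.mem_neighborSet]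
  rw [h1, Set.ncard_union_eq ?_ (Set.toFinite _) (Set.toFinite _),
    Set.ncard_image_of_injective _ Sum.inl_injective,
    Set.ncard_image_of_injective _ Sum.inr_injective]
  · have h2 : {w : ↥W | G.Adj u w}.ncard = (G.neighborSet ↑u ∩ ↑W).ncard := by
      rw [← Set.ncard_image_of_injective _ Subtype.val_injective]
      congr 1
      ext w
      simp [and_comm]
    have h3 : {j : Fin h | (j : ℕ) < ((G.neighborSet ↑u) \ ↑W).ncard}.ncard
        = ((G.neighborSet ↑u) \ ↑W).ncard := by
      generalize ((G.neighborSet ↑u) \ ↑W).ncard = r at hr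
      rw [← Set.ncard_image_of_injective _ Fin.val_injective]
      have : (Fin.val '' {j : Fin h | (j : ℕ) < r}) = ((Finset.range r : Finset ℕ) : Set ℕ) := by
        ext x
        simp only [Set.mem_image, Set.mem_ofPred_eq, Finset.coe_range, Set.mem_Iio]
        constructor
        · rintro ⟨j, hj, rfl⟩
          exact hj
        · intro hx
          exact ⟨⟨x, by omega⟩, hx, rfl⟩
      rw [this, Set.ncard_coe_finset, Finset.card_range]
    rw [h2, h3, Set.ncard_inter_add_ncard_sdiff_eq_ncard _ _ (Set.toFinite _)]
  · rw [Set.disjoint_left]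
    rintro _ ⟨a, -, rfl⟩ ⟨b, -, hb⟩
    cases hb

theorem ndeg_kernel_inr {V : Type*} [Fintype V] [DecidableEq V] (G : SimpleGraph V)
    (W : Finset V) (h : ℕ) (j : Fin (h + 1)) :
    h ≤ ndeg (kernelGraph G W (h + 1)) (Sum.inr j) := by
  unfold ndeg
  have h1 : (Sum.inr '' (({j}ᶜ : Finset (Fin (h + 1))) : Set (Fin (h + 1))) : Set (↥W ⊕ Fin (h+1)))
      ⊆ (kernelGraph G W (h + 1)).neighborSet (Sum.inr j) := by
    rintro _ ⟨i, hi, rfl⟩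
    simp only [Finset.coe_compl, Finset.coe_singleton, Set.mem_compl_iff,
      Set.mem_singleton_iff] at hi
    exact fun e => hi e.symm
  have h2 := Set.ncard_le_ncard h1 (Set.toFinite _)
  rw [Set.ncard_image_of_injective _ Sum.inr_injective, Set.ncard_coe_finset,
    Finset.card_compl] at h2
  simpa using h2

theorem map_univ_sum {α β γ : Type*} [Fintype α] [Fintype β] (f : α ⊕ β → γ) :
    (Finset.univ.val.map f) = (Finset.univ.val.map fun a => f (Sum.inl a)) +
      (Finset.univ.val.map fun b => f (Sum.inr b)) := by
  rw [← Finset.univ_disjSum_univ, Finset.val_disjSum, Multiset.disjSum, Multiset.map_add,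
    Multiset.map_map, Multiset.map_map]
  rfl

theorem map_univ_split {V γ : Type*} [Fintype V] [DecidableEq V] (W : Finset V) (f : V → γ) :
    (Finset.univ.val.map f) = (Finset.univ.val.map fun a : ↥W => f a) + (Wᶜ).val.map f := by
  have h1 : (Finset.univ : Finset V) = W.disjUnion Wᶜ disjoint_compl_right := by
    rw [Finset.disjUnion_eq_union, Finset.union_compl]
  rw [h1, Finset.disjUnion_val, Multiset.map_add]
  congr 1
  have : (W.attach.val.map (fun a => f a.1)) = W.val.map f := by
    exact Multiset.attach_map_val' W.val f
  exact this.symm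

theorem swap_step {V : Type*} [Fintype V] [DecidableEq V] (G : SimpleGraph V) (k Δ : ℕ)
    (hG : ∀ v : V, ndeg G v ≤ Δ) (W : Finset V)
    (hbig : ∀ x, x ∉ W → ∃ S ⊆ W, (∀ y ∈ S, ndeg G y = ndeg G x) ∧ 2 * k * (Δ + 1) ≤ S.card) :
    ∀ (n : ℕ) (A : Finset (Sym2 V)), (∀ e ∈ A, ¬ e.IsDiag ∧ e ∉ G.edgeSet) → A.card ≤ k →
      (A.biUnion Sym2.toFinset \ W).card = n →
      ∃ B : Finset (Sym2 V), (∀ e ∈ B, ¬ e.IsDiag ∧ e ∉ G.edgeSet) ∧ B.card ≤ k ∧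
        (∀ e ∈ B, ∀ v ∈ e, v ∈ W) ∧
        (Finset.univ.val.map fun v => ndeg G v + pcnt B v) =
          (Finset.univ.val.map fun v => ndeg G v + pcnt A v) := by
  classical
  intro n
  induction n with
  | zero =>
    intro A hA hk h0
    refine ⟨A, hA, hk, ?_, rfl⟩
    intro e he v hv
    by_contra hvW
    rw [Finset.card_eq_zero] at h0
    have : v ∈ A.biUnion Sym2.toFinset \ W := by
      simp only [Finset.mem_sdiff, Finset.mem_biUnion, Sym2.mem_toFinset]
      exact ⟨⟨e, he, hv⟩, hvW⟩
    rw [h0] at this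
    simp at this
  | succ n ih =>
    intro A hA hk hn
    set T := A.biUnion Sym2.toFinset with hT
    have hmemT : ∀ v, v ∈ T ↔ ∃ e ∈ A, v ∈ e := by
      intro v
      simp [hT, Finset.mem_biUnion, Sym2.mem_toFinset]
    have hTcard : T.card ≤ 2 * k := by
      calc T.card ≤ A.card * 2 := by
            apply Finset.card_biUnion_le_card_mul
            intro e _
            rw [Sym2.card_toFinset]
            split_ifs <;> omega
        _ ≤ 2 * k := by omega
    obtain ⟨x, hx⟩ : (T \ W).Nonempty := by
      rw [← Finset.card_pos]; omega
    obtain ⟨hxT, hxW⟩ := Finset.mem_sdiff.1 hx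
    obtain ⟨S, hSW, hSd, hSc⟩ := hbig x hxW
    set F := (T.erase x).biUnion (fun t => insert t (Set.toFinite (G.neighborSet t)).toFinset)
      with hF
    have hFcard : F.card ≤ (T.erase x).card * (Δ + 1) := by
      apply Finset.card_biUnion_le_card_mul
      intro t _
      refine (Finset.card_insert_le _ _).trans ?_
      have := hG t
      unfold ndeg at this
      rw [Set.ncard_eq_toFinset_card _ (Set.toFinite _)] at this
      omega
    have hlt : F.card < S.card := by
      have h1 : (T.erase x).card + 1 = T.card := Finset.card_erase_add_one hxT
      have h2 : (T.erase x).card + 1 ≤ 2 * k := by omega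
      have h3 := Nat.mul_le_mul_right (Δ + 1) h2
      rw [add_mul] at h3
      omega
    obtain ⟨y, hyS, hyF⟩ := Finset.exists_mem_notMem_of_card_lt_card hlt
    have hyW := hSW hyS
    have hyx : y ≠ x := fun e => hxW (e ▸ hyW)
    have hyF' : ∀ t ∈ T, t ≠ x → y ≠ t ∧ ¬ G.Adj t y := by
      intro t ht htx
      constructor
      · rintro rfl
        exact hyF (Finset.mem_biUnion.2 ⟨y, Finset.mem_erase.2 ⟨htx, ht⟩, by simp⟩)
      · intro hadj
        exact hyF (Finset.mem_biUnion.2 ⟨t, Finset.mem_erase.2 ⟨htx, ht⟩, by simp [hadj]⟩)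
    have hyT : y ∉ T := fun h => (hyF' y h hyx).1 rfl
    have hsw : ∀ t ∈ T, t ≠ x → Equiv.swap x y t = t := fun t ht htx =>
      Equiv.swap_apply_of_ne_of_ne htx (hyF' t ht htx).1.symm
    have hdeg : ∀ v, ndeg G (Equiv.swap x y v) = ndeg G v := by
      intro v
      rw [Equiv.swap_apply_def]
      split_ifs with h1 h2
      · rw [h1, hSd y hyS]
      · rw [h2, hSd y hyS]
      · rfl
    set A₁ := A.image (Sym2.map (Equiv.swap x y)) with hA₁
    have hval : ∀ e ∈ A₁, ¬ e.IsDiag ∧ e ∉ G.edgeSet := by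
      intro e he
      obtain ⟨e, heA, rfl⟩ := Finset.mem_image.1 he
      induction e using Sym2.ind with
      | _ a b =>
        have haT : a ∈ T := (hmemT a).2 ⟨_, heA, by simp⟩
        have hbT : b ∈ T := (hmemT b).2 ⟨_, heA, by simp⟩
        obtain ⟨h1, h2⟩ := hA _ heA
        simp only [Sym2.mk_isDiag_iff, SimpleGraph.mem_edgeSet] at h1 h2
        simp only [Sym2.map_mk, Sym2.mk_isDiag_iff, SimpleGraph.mem_edgeSet,
          EmbeddingLike.apply_eq_iff_eq]
        refine ⟨h1, ?_⟩
        by_cases ha : a = x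
        · have hb : b ≠ x := fun h => h1 (ha.trans h.symm)
          rw [hsw b hbT hb, ha, Equiv.swap_apply_left]
          exact fun h => (hyF' b hbT hb).2 h.symm
        · rw [hsw a haT ha]
          by_cases hb : b = x
          · rw [hb, Equiv.swap_apply_left]
            exact (hyF' a haT ha).2
          · rw [hsw b hbT hb]
            exact h2
    have hT₁ : A₁.biUnion Sym2.toFinset \ W = (T \ W).erase x := by
      ext v
      simp only [Finset.mem_sdiff, Finset.mem_biUnion, Sym2.mem_toFinset, Finset.mem_erase, hA₁,
        Finset.mem_image, hmemT]
      constructor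
      · rintro ⟨⟨_, ⟨e, he, rfl⟩, hv⟩, hvW⟩
        obtain ⟨a, hae, rfl⟩ := Sym2.mem_map.1 hv
        have haT : a ∈ T := (hmemT a).2 ⟨_, he, hae⟩
        by_cases ha : a = x
        · subst ha
          rw [Equiv.swap_apply_left] at hvW
          exact absurd hyW hvW
        · rw [hsw a haT ha] at hvW ⊢
          exact ⟨ha, ⟨e, he, hae⟩, hvW⟩
      · rintro ⟨hvx, ⟨e, he, hve⟩, hvW⟩
        refine ⟨⟨_, ⟨e, he, rfl⟩, ?_⟩, hvW⟩
        exact Sym2.mem_map.2 ⟨v, hve, hsw v ((hmemT v).2 ⟨e, he, hve⟩) hvx⟩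
    obtain ⟨B, hB1, hB2, hB3, hB4⟩ := ih A₁ hval (Finset.card_image_le.trans hk) (by
      rw [hT₁, Finset.card_erase_of_mem hx]; omega)
    refine ⟨B, hB1, hB2, hB3, hB4.trans ?_⟩
    have hre : (Finset.univ : Finset V).val.map (Equiv.swap x y) = Finset.univ.val := by
      simp
    conv_lhs => rw [← hre, Multiset.map_map]
    apply Multiset.map_congr rfl
    intro v _
    simp only [Function.comp]
    rw [hdeg, hA₁, pcnt_image _ (Equiv.swap x y).injective]

theorem kernelization_for_edge_addition
    {V : Type*} [Fintype V] [DecidableEq V] (G : SimpleGraph V)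
    (k Δ : ℕ) (σ : Multiset ℕ) (hσub : ∀ x ∈ σ, x ≤ Δ) (hσmem : Δ ∈ σ)
    (hG : ∀ v : V, ndeg G v ≤ Δ)
    (Ws : ℕ → Finset V)
    (hWsub : ∀ i ≤ Δ, ∀ v ∈ Ws i, ndeg G v = i)
    (hWcard : ∀ i ≤ Δ,
      (Ws i).card = min {v : V | ndeg G v = i}.ncard (2 * k * (Δ + 1)))
    (hcount : ∀ i ≤ Δ,
      {v : V | ndeg G v = i}.ncard - min {v : V | ndeg G v = i}.ncard (2 * k * (Δ + 1))
        ≤ σ.count i)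
    (W : Finset V) (hW : W = (Finset.range (Δ + 1)).biUnion Ws)
    (G' : SimpleGraph (↥W ⊕ Fin (Δ + 2))) (hG' : G' = kernelGraph G W (Δ + 2))
    (σ' : Multiset ℕ)
    (hσ' : σ' = ((Finset.univ : Finset (Fin (Δ + 2))).val.map fun j =>
        ndeg G' (Sum.inr j)) +
      (σ - (Finset.range (Δ + 1)).sum fun i =>
        Multiset.replicate
          ({v : V | ndeg G v = i}.ncard -
            min {v : V | ndeg G v = i}.ncard (2 * k * (Δ + 1))) i)) :
    Fintype.card (↥W ⊕ Fin (Δ + 2)) ≤ 2 * k * (Δ + 1) ^ 2 + Δ + 2 ∧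
    ((∃ A : Finset (Sym2 V),
        (∀ e ∈ A, ¬ e.IsDiag ∧ e ∉ G.edgeSet) ∧ A.card ≤ k ∧
        (Finset.univ.val.map fun v : V =>
          ndeg (G ⊔ SimpleGraph.fromEdgeSet ↑A) v) = σ) ↔
      (∃ A' : Finset (Sym2 (↥W ⊕ Fin (Δ + 2))),
        (∀ e ∈ A', ¬ e.IsDiag ∧ e ∉ G'.edgeSet) ∧ A'.card ≤ k ∧
        (Finset.univ.val.map fun v : ↥W ⊕ Fin (Δ + 2) =>
          ndeg (G' ⊔ SimpleGraph.fromEdgeSet ↑A') v) = σ')) := by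
  
  have hdisj : ∀ v, v ∈ W ↔ v ∈ Ws (ndeg G v) := by
    intro v
    rw [hW, Finset.mem_biUnion]
    constructor
    · rintro ⟨i, hi, hv⟩
      have := hWsub i (by simpa [Nat.lt_succ_iff] using hi) v hv
      rwa [this]
    · intro hv
      exact ⟨_, by simpa [Nat.lt_succ_iff] using hG v, hv⟩
  set R := (Finset.range (Δ + 1)).sum fun i =>
        Multiset.replicate
          ({v : V | ndeg G v = i}.ncard -
            min {v : V | ndeg G v = i}.ncard (2 * k * (Δ + 1))) i with hRdef
  have hδ : ∀ i, {v : V | ndeg G v = i}.ncard = (Finset.univ.filter fun v => ndeg G v = i).card := by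
    intro i
    rw [← Set.ncard_coe_finset]
    simp
  have hcountR : ∀ i, R.count i = if i ≤ Δ then {v : V | ndeg G v = i}.ncard -
            min {v : V | ndeg G v = i}.ncard (2 * k * (Δ + 1)) else 0 := by
    intro i
    rw [hRdef, Multiset.count_sum']
    simp only [Multiset.count_replicate]
    rw [Finset.sum_ite_eq' (Finset.range (Δ + 1)) i]
    simp [Nat.lt_succ_iff]
  have hRle : R ≤ σ := by
    rw [Multiset.le_iff_count]
    intro i
    rw [hcountR]
    split_ifs with h
    · exact hcount i h
    · exact Nat.zero_le _
  have hRmap : (Wᶜ).val.map (ndeg G) = R := by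
    ext i
    rw [hcountR, Multiset.count_map]
    have e1 : (Multiset.filter (fun a => i = ndeg G a) (Wᶜ).val).card
        = ((Wᶜ).filter fun a => ndeg G a = i).card := by
      rw [Finset.card_def, Finset.filter_val]
      simp only [eq_comm]
    rw [e1]
    split_ifs with h
    · rw [← hWcard i h, hδ]
      have hsub : Ws i ⊆ Finset.univ.filter fun v => ndeg G v = i := by
        intro v hv
        simpa using hWsub i h v hv
      rw [← Finset.card_sdiff_of_subset hsub]
      congr 1
      ext v
      simp only [Finset.mem_filter, Finset.mem_compl, Finset.mem_sdiff, Finset.mem_univ, true_and,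
        hdisj]
      constructor
      · rintro ⟨h1, rfl⟩
        exact ⟨rfl, h1⟩
      · rintro ⟨rfl, h1⟩
        exact ⟨h1, rfl⟩
    · rw [Finset.card_eq_zero, Finset.filter_eq_empty_iff]
      rintro v - rfl
      exact h (hG v)
  have hinl : ∀ u : ↥W, ndeg G' (Sum.inl u) = ndeg G u := by
    intro u
    rw [hG']
    exact ndeg_kernel_inl G W _ u ((hG u).trans (by omega))
  have hinr : ∀ j, Δ + 1 ≤ ndeg G' (Sum.inr j) := by
    intro j
    rw [hG']
    exact ndeg_kernel_inr G W (Δ + 1) j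
  set N := (Finset.univ : Finset (Fin (Δ + 2))).val.map fun j => ndeg G' (Sum.inr j) with hN
  have hvalid : ∀ C : Finset (Sym2 ↥W),
      (∀ e ∈ C.image (Sym2.map Subtype.val), ¬ e.IsDiag ∧ e ∉ G.edgeSet) ↔
      (∀ e ∈ C.image (Sym2.map (Sum.inl : ↥W → ↥W ⊕ Fin (Δ + 2))),
        ¬ e.IsDiag ∧ e ∉ G'.edgeSet) := by
    intro C
    simp only [Finset.forall_mem_image]
    refine forall₂_congr fun e _ => ?_
    induction e using Sym2.ind with
    | _ a b =>
      subst hG'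
      simp only [Sym2.map_mk, Sym2.mk_isDiag_iff, SimpleGraph.mem_edgeSet, Sum.inl.injEq,
        Subtype.val_inj]
      exact Iff.rfl
  have hkey : ∀ C : Finset (Sym2 ↥W),
      (∀ e ∈ C.image (Sym2.map Subtype.val), ¬ e.IsDiag ∧ e ∉ G.edgeSet) →
      ((Finset.univ.val.map fun v : V =>
          ndeg G v + pcnt (C.image (Sym2.map Subtype.val)) v) = σ ↔
      (Finset.univ.val.map fun v : ↥W ⊕ Fin (Δ + 2) =>
          ndeg G' v + pcnt (C.image (Sym2.map Sum.inl)) v) = σ') := by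
    intro C hC
    rw [map_univ_split W, map_univ_sum]
    have e1 : (Wᶜ).val.map (fun v => ndeg G v + pcnt (C.image (Sym2.map Subtype.val)) v) = R := by
      rw [← hRmap]
      apply Multiset.map_congr rfl
      intro v hv
      rw [pcnt_image_zero, add_zero]
      rintro u rfl
      exact (Finset.mem_compl.1 hv) u.2
    have e2 : (Finset.univ.val.map fun j : Fin (Δ + 2) => ndeg G' (Sum.inr j) +
        pcnt (C.image (Sym2.map (Sum.inl : ↥W → ↥W ⊕ Fin (Δ + 2)))) (Sum.inr j)) = N := by
      apply Multiset.map_congr rfl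
      intro j _
      rw [pcnt_image_zero, add_zero]
      rintro u hu
      cases hu
    rw [e1, e2, hσ']
    simp only [pcnt_image _ Subtype.val_injective, pcnt_image _ Sum.inl_injective, hinl]
    rw [add_comm N, add_left_inj]
    constructor
    · intro h
      rw [← h, Multiset.add_sub_cancel_right]
    · intro h
      rw [h, Multiset.sub_add_cancel hRle]
  refine ⟨?_, ?_, ?_⟩
  · rw [Fintype.card_sum, Fintype.card_fin, Fintype.card_coe]
    have : W.card ≤ (Finset.range (Δ + 1)).card * (2 * k * (Δ + 1)) := by
      rw [hW]
      apply Finset.card_biUnion_le_card_mul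
      intro i hi
      rw [hWcard i (by simpa [Nat.lt_succ_iff] using hi)]
      exact min_le_right _ _
    rw [Finset.card_range] at this
    nlinarith
  · rintro ⟨A, hA, hAk, hAσ⟩
    simp only [ndeg_sup G A hA] at hAσ
    have hbig : ∀ x, x ∉ W → ∃ S ⊆ W, (∀ y ∈ S, ndeg G y = ndeg G x) ∧
        2 * k * (Δ + 1) ≤ S.card := by
      intro x hx
      have hsub : ∀ y ∈ Ws (ndeg G x), ndeg G y = ndeg G x := hWsub _ (hG x)
      refine ⟨Ws (ndeg G x), ?_, hsub, ?_⟩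
      · intro y hy
        rw [hdisj, hsub y hy]
        exact hy
      · have h1 := hWcard _ (hG x)
        have h2 : (Ws (ndeg G x)).card < {v : V | ndeg G v = ndeg G x}.ncard := by
          rw [hδ]
          apply Finset.card_lt_card
          rw [Finset.ssubset_iff_of_subset]
          · exact ⟨x, by simp, fun h => hx ((hdisj x).2 h)⟩
          · intro y hy
            simpa using hsub y hy
        rw [h1]
        rw [h1] at h2
        rcases le_total {v : V | ndeg G v = ndeg G x}.ncard (2 * k * (Δ + 1)) with h | h
        · rw [min_eq_left h] at h2
          exact absurd h2 (lt_irrefl _)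
        · rw [min_eq_right h]
    obtain ⟨B, hB, hBk, hBW, hBσ⟩ := swap_step G k Δ hG W hbig _ A hA hAk rfl
    obtain ⟨C, rfl, hCc⟩ := exists_preimage (Subtype.val : ↥W → V) Subtype.val_injective B
      (fun e he v hv => ⟨⟨v, hBW e he v hv⟩, rfl⟩)
    refine ⟨C.image (Sym2.map Sum.inl), (hvalid C).1 hB, ?_, ?_⟩
    · exact Finset.card_image_le.trans (hCc.trans_le hBk)
    · simp only [ndeg_sup G' _ ((hvalid C).1 hB)]
      exact (hkey C hB).1 (hBσ.trans hAσ)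
  · rintro ⟨A', hA', hAk, hAσ⟩
    simp only [ndeg_sup G' A' hA'] at hAσ
    have hzero : ∀ j, pcnt A' (Sum.inr j) = 0 := by
      have h1 := hAσ
      rw [map_univ_sum, hσ'] at h1
      have h2 := congrArg (Multiset.filter (fun d => Δ < d)) h1
      rw [Multiset.filter_add, Multiset.filter_add] at h2
      have f1 : Multiset.filter (fun d => Δ < d) N = N := by
        rw [Multiset.filter_eq_self]
        intro d hd
        obtain ⟨j, -, rfl⟩ := Multiset.mem_map.1 hd
        exact hinr j
      have f2 : Multiset.filter (fun d => Δ < d) (σ - R) = 0 := by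
        rw [Multiset.filter_eq_nil]
        intro d hd
        exact not_lt.2 (hσub d (Multiset.mem_of_le (Multiset.sub_le_self _ _) hd))
      have f3 : Multiset.filter (fun d => Δ < d) (Finset.univ.val.map fun j : Fin (Δ + 2) =>
          ndeg G' (Sum.inr j) + pcnt A' (Sum.inr j)) = (Finset.univ.val.map fun j =>
          ndeg G' (Sum.inr j) + pcnt A' (Sum.inr j)) := by
        rw [Multiset.filter_eq_self]
        intro d hd
        obtain ⟨j, -, rfl⟩ := Multiset.mem_map.1 hd
        have := hinr j
        show Δ < _ + _
        omega
      rw [f1, f2, f3, add_zero] at h2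
      have h3 := congrArg Multiset.sum h2
      rw [Multiset.sum_add, hN] at h3
      have h4 := congrArg Multiset.card h2
      rw [Multiset.card_add, hN, Multiset.card_map, Multiset.card_map] at h4
      have h5 : (Multiset.filter (fun d => Δ < d) (Finset.univ.val.map fun a : ↥W =>
          ndeg G' (Sum.inl a) + pcnt A' (Sum.inl a))) = 0 := by
        rw [← Multiset.card_eq_zero]
        omega
      rw [h5, Multiset.sum_zero, zero_add] at h3
      change ∑ j : Fin (Δ + 2), (ndeg G' (Sum.inr j) + pcnt A' (Sum.inr j)) =
        ∑ j : Fin (Δ + 2), ndeg G' (Sum.inr j) at h3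
      rw [Finset.sum_add_distrib] at h3
      have h6 : ∑ j : Fin (Δ + 2), pcnt A' (Sum.inr j) = 0 := by omega
      intro j
      exact (Finset.sum_eq_zero_iff.1 h6) j (Finset.mem_univ _)
    obtain ⟨C, rfl, hCc⟩ := exists_preimage (Sum.inl : ↥W → ↥W ⊕ Fin (Δ + 2)) Sum.inl_injective A'
      (by
        rintro e he (u | j) hv
        · exact ⟨u, rfl⟩
        · have := hzero j
          unfold pcnt at this
          rw [Finset.card_eq_zero, Finset.filter_eq_empty_iff] at this
          exact absurd hv (this he))
    have hB := (hvalid C).2 hA'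
    refine ⟨C.image (Sym2.map Subtype.val), hB, ?_, ?_⟩
    · exact Finset.card_image_le.trans (hCc.trans_le hAk)
    · simp only [ndeg_sup G _ hB]
      exact (hkey C hB).2 hAσ
end

section
/- Let k ≥ 2 and d ≥ k−1, and let G be the disjoint union of graphs G_1, …, G_t, each of which is d-regular on n vertices. Then some G_i contains a clique on k vertices if and only if there exist a vertex set U ⊆ V(G), a set D of edges of G−U, and a set A of unordered pairs of distinct non-adjacent vertices of V(G)∖U, with |U| + |D| + |A| ≤ k(k−1)/2, such that the degree multiset of G−U−D+A consists of nt−k copies of d and k copies of d−(k−1). -/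
/-- The graph `G - U - D + A`, obtained from `G` by deleting the vertices of `U`
(together with all incident edges), deleting the edges of `D` and adding the pairs of `A`
as edges. (The deleted vertices become isolated; degrees are only read off `V ∖ U`.) -/
def edit {V : Type*} (G : SimpleGraph V) (U : Finset V) (D A : Set (Sym2 V)) :
    SimpleGraph V :=
  SimpleGraph.fromEdgeSet ((G.edgeSet \ (D ∪ {e : Sym2 V | ∃ u ∈ U, u ∈ e})) ∪ A)

/-- The disjoint union of the family of graphs `Gs 0, …, Gs (t-1)`, realized on the
vertex set `Fin t × V`. -/
def disjUnion {t : ℕ} {V : Type*} (Gs : Fin t → SimpleGraph V) :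
    SimpleGraph (Fin t × V) where
  Adj x y := x.1 = y.1 ∧ (Gs x.1).Adj x.2 y.2
  symm := by
    refine ⟨?_⟩
    rintro ⟨i, u⟩ ⟨j, w⟩ ⟨h, hadj⟩
    cases h
    exact ⟨rfl, hadj.symm⟩
  loopless := by
    refine ⟨?_⟩
    rintro ⟨i, u⟩ ⟨-, hadj⟩
    exact (Gs i).loopless.irrefl u hadj

theorem ndeg_disjUnion {t : ℕ} {V : Type*} (Gs : Fin t → SimpleGraph V) (x : Fin t × V) :
    ndeg (disjUnion Gs) x = ndeg (Gs x.1) x.2 := by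
  unfold ndeg
  have : (disjUnion Gs).neighborSet x = (Prod.mk x.1) '' ((Gs x.1).neighborSet x.2) := by
    ext ⟨j, w⟩
    simp only [SimpleGraph.mem_neighborSet, disjUnion, Set.mem_image, Prod.mk.injEq]
    constructor
    · rintro ⟨h, h2⟩
      exact ⟨w, h2, h, rfl⟩
    · rintro ⟨w', h, rfl, rfl⟩
      exact ⟨rfl, h⟩
  rw [this, Set.ncard_image_of_injective _ (Prod.mk_right_injective x.1)]

/-- Deleting the edges of a clique of a regular graph yields the desired degrees. -/
theorem forward_aux {W : Type*} [Fintype W] [DecidableEq W] (G : SimpleGraph W) (k d : ℕ)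
    (hreg : ∀ v, ndeg G v = d) (S : Finset W) (hS : G.IsNClique k S) :
    ∃ D : Finset (Sym2 W), (∀ e ∈ D, e ∈ G.edgeSet) ∧ D.card ≤ k * (k - 1) / 2 ∧
      ((Finset.univ : Finset W).val.map fun v => ndeg (edit G ∅ ↑D ∅) v) =
        Multiset.replicate (Fintype.card W - k) d + Multiset.replicate k (d - (k - 1)) := by
  have hmem : ∀ a b, s(a, b) ∈ S.offDiag.image Sym2.mk.uncurry ↔ (a ∈ S ∧ b ∈ S ∧ a ≠ b) := by
    intro a b
    simp only [Finset.mem_image, Finset.mem_offDiag, Prod.exists, Function.uncurry_apply_pair,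
      Sym2.eq_iff]
    constructor
    · rintro ⟨x, y, ⟨h1, h2, h3⟩, ⟨rfl, rfl⟩ | ⟨rfl, rfl⟩⟩
      · exact ⟨h1, h2, h3⟩
      · exact ⟨h2, h1, h3.symm⟩
    · intro h
      exact ⟨a, b, h, Or.inl ⟨rfl, rfl⟩⟩
  refine ⟨S.offDiag.image Sym2.mk.uncurry, ?_, ?_, ?_⟩
  · intro e
    induction e with
    | _ a b =>
      rw [hmem]
      rintro ⟨ha, hb, hab⟩
      exact hS.1 ha hb hab
  · rw [Sym2.card_image_offDiag, hS.2, Nat.choose_two_right]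
  · generalize S.offDiag.image Sym2.mk.uncurry = D at hmem
    have hadj : ∀ a b, (edit G ∅ ↑D ∅).Adj a b ↔ (G.Adj a b ∧ ¬ (a ∈ S ∧ b ∈ S)) := by
      intro a b
      simp only [edit, SimpleGraph.fromEdgeSet_adj, Set.mem_union, Set.mem_sdiff,
        SimpleGraph.mem_edgeSet, Finset.mem_coe, hmem]
      constructor
      · rintro ⟨⟨h1, h2⟩ | h, h3⟩
        · exact ⟨h1, fun h => h2 (Or.inl ⟨h.1, h.2, h3⟩)⟩
        · exact absurd h (by simp)
      · rintro ⟨h1, h2⟩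
        refine ⟨Or.inl ⟨h1, ?_⟩, h1.ne⟩
        rintro (h | h)
        · exact h2 ⟨h.1, h.2.1⟩
        · simp at h
    have hin : ∀ v ∈ S, ndeg (edit G ∅ ↑D ∅) v = d - (k - 1) := by
      intro v hv
      have : (edit G ∅ ↑D ∅).neighborSet v = G.neighborSet v \ ↑(S.erase v) := by
        ext w
        simp only [SimpleGraph.mem_neighborSet, hadj, Set.mem_sdiff, Finset.mem_coe,
          Finset.mem_erase]
        constructor
        · rintro ⟨h1, h2⟩
          exact ⟨h1, fun h => h2 ⟨hv, h.2⟩⟩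
        · rintro ⟨h1, h2⟩
          exact ⟨h1, fun h => h2 ⟨h1.ne', h.2⟩⟩
      unfold ndeg
      rw [this, Set.ncard_sdiff, Set.ncard_coe_finset, Finset.card_erase_of_mem hv, hS.2]
      · rw [← hreg v]; rfl
      · intro w hw
        simp only [Finset.mem_coe, Finset.mem_erase] at hw
        exact hS.1 hv hw.2 hw.1.symm
    have hout : ∀ v ∉ S, ndeg (edit G ∅ ↑D ∅) v = d := by
      intro v hv
      rw [← hreg v]
      unfold ndeg
      congr 1
      ext w
      simp [hadj, hv]
    rw [← Multiset.filter_add_not (· ∈ S) (Finset.univ : Finset W).val, Multiset.map_add,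
      add_comm]
    congr 1
    · rw [Multiset.map_congr rfl (g := fun _ => d), Multiset.map_const']
      · congr 1
        rw [← hS.2, ← Finset.card_compl]
        change (Finset.univ.filter (fun x => ¬ x ∈ S)).card = _
        congr 1
        ext; simp
      · intro x hx
        exact hout x (Multiset.mem_filter.1 hx).2
    · rw [Multiset.map_congr rfl (g := fun _ => d - (k - 1)), Multiset.map_const']
      · congr 1
        rw [← hS.2]
        change (Finset.univ.filter (fun x => x ∈ S)).card = _
        congr 1
        ext; simp
      · intro x hx
        exact hin x (Multiset.mem_filter.1 hx).2

theorem backward_aux {W : Type*} [Fintype W] [DecidableEq W] (G : SimpleGraph W) (k d : ℕ)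
    (hk : 2 ≤ k) (hd : k - 1 ≤ d)
    (hreg : ∀ v, ndeg G v = d) (U : Finset W) (D A : Finset (Sym2 W))
    (hD : ∀ e ∈ D, e ∈ G.edgeSet) (hc : D.card ≤ k * (k - 1) / 2)
    (h : ((Finset.univ \ U).val.map fun v => ndeg (edit G U ↑D ↑A) v) =
        Multiset.replicate (Fintype.card W - k) d + Multiset.replicate k (d - (k - 1))) :
    ∃ S : Finset W, G.IsNClique k S := by
  classical
  have hU : U = ∅ := by
    have h1 := congrArg Multiset.card h
    have h2 : (Finset.univ \ U).card = Fintype.card W - U.card := by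
      rw [Finset.card_sdiff_of_subset (Finset.subset_univ _), Finset.card_univ]
    have h3 : U.card ≤ Fintype.card W := Finset.card_le_univ U
    simp only [Multiset.card_map, Finset.card_val, Multiset.card_add,
      Multiset.card_replicate] at h1
    rw [← Finset.card_eq_zero]
    omega
  subst hU
  rw [Finset.sdiff_empty] at h
  set E := edit G ∅ ↑D ↑A with hE
  obtain ⟨S, hSdef⟩ : ∃ S, S = Finset.univ.filter (fun v => ndeg E v = d - (k - 1)) := ⟨_, rfl⟩
  have hScard : S.card = k := by
    have h1 := congrArg (Multiset.count (d - (k - 1))) h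
    rw [Multiset.count_map, Multiset.count_add, Multiset.count_replicate_self,
      Multiset.count_replicate, if_neg (by omega), zero_add] at h1
    rw [← h1, hSdef]
    simp only [Finset.card, Finset.filter_val]
    congr 1
    exact Multiset.filter_congr (fun x _ => eq_comm)
  obtain ⟨H, hH⟩ : ∃ H : SimpleGraph W, H = SimpleGraph.fromEdgeSet (↑D : Set (Sym2 W)) :=
    ⟨_, rfl⟩
  have hHadj : ∀ a b, H.Adj a b ↔ s(a, b) ∈ D := by
    intro a b
    rw [hH, SimpleGraph.fromEdgeSet_adj, Finset.mem_coe]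
    exact ⟨fun h => h.1, fun h => ⟨h, (show G.Adj a b from hD _ h).ne⟩⟩
  have hedge : H.edgeFinset = D := by
    ext e
    induction e with
    | _ a b => rw [SimpleGraph.mem_edgeFinset, SimpleGraph.mem_edgeSet, hHadj]
  have hdeg : ∀ v ∈ S, k - 1 ≤ H.degree v := by
    intro v hv
    rw [hSdef, Finset.mem_filter] at hv
    have hsub : G.neighborSet v ⊆ E.neighborSet v ∪ H.neighborSet v := by
      intro w hw
      simp only [SimpleGraph.mem_neighborSet, Set.mem_union] at hw ⊢
      by_cases hm : s(v, w) ∈ D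
      · exact Or.inr ((hHadj _ _).2 hm)
      · left
        rw [hE, edit, SimpleGraph.fromEdgeSet_adj]
        refine ⟨Or.inl ⟨hw, ?_⟩, hw.ne⟩
        rintro (h | h)
        · exact hm h
        · simp at h
    have h1 := (Set.ncard_le_ncard hsub).trans (Set.ncard_union_le _ _)
    have h2 : (H.neighborSet v).ncard = H.degree v := by
      rw [Set.ncard_eq_toFinset_card']; rfl
    have h3 : (G.neighborSet v).ncard = d := hreg v
    have h4 : (E.neighborSet v).ncard = d - (k - 1) := hv.2
    omega
  have hsum := H.sum_degrees_eq_twice_card_edges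
  rw [hedge] at hsum
  have hsplit := Finset.sum_add_sum_compl S (fun v => H.degree v)
  have hSsum : k * (k - 1) ≤ ∑ v ∈ S, H.degree v := by
    have := Finset.card_nsmul_le_sum S _ _ hdeg
    rwa [hScard, smul_eq_mul] at this
  have hzero : ∑ v ∈ Sᶜ, H.degree v = 0 := by omega
  rw [Finset.sum_eq_zero_iff] at hzero
  have hnb : ∀ v w, H.Adj v w → w ∈ S := by
    intro v w hvw
    by_contra hw
    have h0 := hzero w (Finset.mem_compl.2 hw)
    have : v ∈ H.neighborFinset w := by
      rw [SimpleGraph.mem_neighborFinset]; exact hvw.symm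
    have := Finset.card_pos.2 ⟨v, this⟩
    rw [SimpleGraph.card_neighborFinset_eq_degree] at this
    omega
  refine ⟨S, ?_, hScard⟩
  intro v hv w hw hvw
  have heq : H.neighborFinset v = S.erase v := by
    apply Finset.eq_of_subset_of_card_le
    · intro x hx
      rw [SimpleGraph.mem_neighborFinset] at hx
      exact Finset.mem_erase.2 ⟨hx.ne', hnb _ _ hx⟩
    · rw [Finset.card_erase_of_mem hv, hScard, SimpleGraph.card_neighborFinset_eq_degree]
      exact hdeg v hv
  have : w ∈ H.neighborFinset v := by
    rw [heq]; exact Finset.mem_erase.2 ⟨hvw.symm, hw⟩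
  rw [SimpleGraph.mem_neighborFinset, hHadj] at this
  exact hD _ this


theorem clique_in_some_summand_iff_edit_to_degree_sequence
    {t : ℕ} {V : Type*} [Fintype V] [DecidableEq V] (n k d : ℕ) (hk : 2 ≤ k)
    (hd : k - 1 ≤ d) (hn : Fintype.card V = n)
    (Gs : Fin t → SimpleGraph V) (hreg : ∀ i : Fin t, ∀ v : V, ndeg (Gs i) v = d) :
    (∃ i : Fin t, ∃ K : Finset V, (Gs i).IsNClique k K) ↔
      ∃ (U : Finset (Fin t × V)) (D A : Finset (Sym2 (Fin t × V))),
        (∀ e ∈ D, e ∈ (disjUnion Gs).edgeSet ∧ ∀ u ∈ U, u ∉ e) ∧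
        (∀ e ∈ A, ¬ e.IsDiag ∧ e ∉ (disjUnion Gs).edgeSet ∧ ∀ u ∈ U, u ∉ e) ∧
        U.card + D.card + A.card ≤ k * (k - 1) / 2 ∧
        ((Finset.univ \ U).val.map fun v => ndeg (edit (disjUnion Gs) U ↑D ↑A) v) =
          Multiset.replicate (n * t - k) d + Multiset.replicate k (d - (k - 1)) := by
  have hreg' : ∀ x, ndeg (disjUnion Gs) x = d := fun x => by
    rw [ndeg_disjUnion]; exact hreg _ _
  have hcard : Fintype.card (Fin t × V) = n * t := by
    rw [Fintype.card_prod, Fintype.card_fin, hn, mul_comm]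
  constructor
  · rintro ⟨i, K, hK⟩
    have hS : (disjUnion Gs).IsNClique k (K.map ⟨Prod.mk i, Prod.mk_right_injective i⟩) := by
      refine ⟨?_, by rw [Finset.card_map, hK.2]⟩
      intro x hx y hy hxy
      simp only [Finset.coe_map, Function.Embedding.coeFn_mk, Set.mem_image,
        Finset.mem_coe] at hx hy
      obtain ⟨a, ha, rfl⟩ := hx
      obtain ⟨b, hb, rfl⟩ := hy
      exact ⟨rfl, hK.1 ha hb (fun h => hxy (by rw [h]))⟩
    obtain ⟨D, h1, h2, h3⟩ := forward_aux _ k d hreg' _ hS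
    refine ⟨∅, D, ∅, fun e he => ⟨h1 e he, by simp⟩, by simp, by simpa using h2, ?_⟩
    rw [hcard] at h3
    rw [Finset.sdiff_empty, Finset.coe_empty]
    exact h3
  · rintro ⟨U, D, A, hD, hA, hc, h⟩
    rw [← hcard] at h
    obtain ⟨S, hS⟩ := backward_aux _ k d hk hd hreg' U D A (fun e he => (hD e he).1)
      (by omega) h
    have hne : S.Nonempty := by
      rw [← Finset.card_pos, hS.2]; omega
    obtain ⟨x, hx⟩ := hne
    have hfst : ∀ y ∈ S, y.1 = x.1 := by
      intro y hy
      by_cases hxy : y = x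
      · rw [hxy]
      · exact (hS.1 hy hx hxy).1
    refine ⟨x.1, S.image Prod.snd, ?_, ?_⟩
    · intro a ha b hb hab
      simp only [Finset.coe_image, Set.mem_image, Finset.mem_coe] at ha hb
      obtain ⟨p, hp, rfl⟩ := ha
      obtain ⟨q, hq, rfl⟩ := hb
      have := (hS.1 hp hq (fun h => hab (by rw [h]))).2
      rwa [hfst p hp] at this
    · rw [Finset.card_image_of_injOn, hS.2]
      intro p hp q hq hpq
      exact Prod.ext ((hfst p hp).trans (hfst q hq).symm) hpq
end
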